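/- Let Γ be a balanced graph with no closed paths of odd length and let C be an n-balanced colouring of Γ. Then there exists a function p : E(Γ) → {1, −1} such that for every pair of distinct edges e₁, e₂ of the same colour lying in the same ∼-equivalence class, parity(e₁, e₂) = p(e₁)·p(e₂). -/

import Mathlib

/-!  We work with finite graphs that are not necessarily simplicial
(multiple edges between two vertices are allowed): a graph is given by a
vertex type `V`, an edge type `E`, and an endpoint map `ends : E → Sym2 V`.
Edges carry labels `l e` which are even integers `≥ 4`, and colours
`C e ∈ {1, …, n}` (modelled as `Fin n`). -/

/-- A walk of length `m` in the graph with endpoint map `ends : E → Sym2 V`: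
a sequence of `m + 1` vertices together with `m` edges, the `i`-th edge
having the `i`-th and `(i+1)`-st vertices as its endpoints. -/
structure GraphWalk {V E : Type*} (ends : E → Sym2 V) (m : ℕ) where
  vert : Fin (m + 1) → V
  edge : Fin m → E
  ends_eq : ∀ i : Fin m, ends (edge i) = s(vert i.castSucc, vert i.succ)

/-- A walk is closed if it starts and ends at the same vertex. -/
def GraphWalk.IsClosed {V E : Type*} {ends : E → Sym2 V} {m : ℕ}
    (w : GraphWalk ends m) : Prop :=
  w.vert 0 = w.vert (Fin.last m)

/-- A simple cycle: a nontrivial closed walk with pairwise distinct edges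
and pairwise distinct vertices (apart from the repeated initial vertex). -/
def GraphWalk.IsSimpleCycle {V E : Type*} {ends : E → Sym2 V} {m : ℕ}
    (w : GraphWalk ends m) : Prop :=
  0 < m ∧ w.IsClosed ∧ Function.Injective w.edge ∧
    Function.Injective fun i : Fin m => w.vert i.castSucc

/-- A minimal simple cycle: a simple cycle whose edge set does not strictly
contain the edge set of any other simple cycle. -/
def GraphWalk.IsMinimalCycle {V E : Type*} {ends : E → Sym2 V} {m : ℕ}
    (w : GraphWalk ends m) : Prop :=
  w.IsSimpleCycle ∧ ∀ (m' : ℕ) (w' : GraphWalk ends m'), w'.IsSimpleCycle →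
    Set.range w'.edge ⊆ Set.range w.edge → Set.range w'.edge = Set.range w.edge

/-- The relation `∼` on edges of colour `i`: `e ∼ f` iff there is a finite
sequence of minimal simple cycles `P₀, …, P_m` with `e ∈ P₀`, `f ∈ P_m`,
and consecutive cycles sharing at least one edge of colour `i`. -/
def SameCycleClass {V E : Type*} (ends : E → Sym2 V) {n : ℕ} (C : E → Fin n)
    (i : Fin n) (e f : E) : Prop :=
  ∃ (m : ℕ) (len : Fin (m + 1) → ℕ)
    (cyc : (k : Fin (m + 1)) → GraphWalk ends (len k)),
      (∀ k, (cyc k).IsMinimalCycle) ∧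
      e ∈ Set.range (cyc 0).edge ∧ f ∈ Set.range (cyc (Fin.last m)).edge ∧
      ∀ k : Fin m, ∃ g : E, C g = i ∧ g ∈ Set.range (cyc k.castSucc).edge ∧
        g ∈ Set.range (cyc k.succ).edge

theorem exists_potential_aux {V E : Type*} (ends : E → Sym2 V) (f : E → ZMod 2)
    (hf : ∀ (m : ℕ) (w : GraphWalk ends m), w.IsSimpleCycle → ∑ j, f (w.edge j) = 0)
    (F : Finset E) :
    ∃ s : V → ZMod 2, ∀ e ∈ F, ∀ u v, ends e = s(u, v) → f e = s u + s v := by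
  classical
  induction F using Finset.induction_on with
  | empty => exact ⟨0, by simp⟩
  | insert e F heF ih =>
    obtain ⟨s, hs⟩ := ih
    obtain ⟨u, v, huv⟩ : ∃ u v, ends e = s(u, v) := by
      induction h : ends e with
      | _ a b => exact ⟨a, b, rfl⟩
    let H : SimpleGraph V := SimpleGraph.fromRel (fun x y => ∃ g ∈ F, ends g = s(x, y))
    have hadj : ∀ x y, H.Adj x y → ∃ g ∈ F, ends g = s(x, y) := by
      intro x y h
      rw [SimpleGraph.fromRel_adj] at h
      obtain ⟨-, h | ⟨g, hg, h⟩⟩ := h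
      · exact h
      · exact ⟨g, hg, h.trans Sym2.eq_swap⟩
    suffices hh : ∃ s : V → ZMod 2, (∀ e ∈ F, ∀ u v, ends e = s(u, v) → f e = s u + s v) ∧
        f e = s u + s v by
      obtain ⟨s, h1, h2⟩ := hh
      refine ⟨s, fun g hg x y hxy => ?_⟩
      rcases Finset.mem_insert.1 hg with rfl | hg
      · rw [huv, Sym2.eq_iff] at hxy
        rcases hxy with ⟨rfl, rfl⟩ | ⟨rfl, rfl⟩
        · exact h2
        · rw [h2, add_comm]
      · exact h1 g hg x y hxy
    by_cases hr : H.Reachable u v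
    · refine ⟨s, hs, ?_⟩
      obtain ⟨p, hp⟩ := hr.exists_isPath
      have hinj := hp.getVert_injOn
      have hch : ∀ j : Fin p.length, ∃ g ∈ F, ends g = s(p.getVert j, p.getVert (j + 1)) :=
        fun j => hadj _ _ (p.adj_getVert_succ j.2)
      choose g hgF hg using hch
      let w : GraphWalk ends (p.length + 1) :=
        { vert := Fin.snoc (α := fun _ => V) (fun j : Fin (p.length + 1) => p.getVert j) u
          edge := Fin.snoc (α := fun _ => E) g e
          ends_eq := by
            intro i
            refine Fin.lastCases ?_ (fun j => ?_) i
            · rw [Fin.snoc_last, Fin.snoc_castSucc, Fin.succ_last, Fin.snoc_last, huv]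
              simp [Sym2.eq_swap]
            · rw [Fin.snoc_castSucc, Fin.snoc_castSucc, Fin.succ_castSucc, Fin.snoc_castSucc, hg]
              simp }
      have hw : w.IsSimpleCycle := by
        refine ⟨Nat.succ_pos _, ?_, ?_, ?_⟩
        · change w.vert (Fin.castSucc 0) = _
          simp only [w, Fin.snoc_castSucc, Fin.snoc_last]
          simp
        · have key : ∀ j k : Fin p.length, g j = g k → j = k := by
            intro j k hjk
            have h := hg j
            rw [hjk, hg k, Sym2.eq_iff] at h
            have hj := j.2
            have hk := k.2
            rcases h with ⟨h, -⟩ | ⟨h, h'⟩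
            · have := hinj (by simp) (by simp) h
              exact Fin.ext this.symm
            · have := hinj (by simp) (by simp) h
              have := hinj (by simp) (by simp) h'
              omega
          intro a b
          refine Fin.lastCases ?_ (fun j => ?_) a <;> refine Fin.lastCases ?_ (fun k => ?_) b
          · simp
          · simp only [w, Fin.snoc_castSucc, Fin.snoc_last]
            intro h
            exact absurd (h ▸ hgF k) heF
          · simp only [w, Fin.snoc_castSucc, Fin.snoc_last]
            intro h
            exact absurd (h ▸ hgF j) heF
          · simp only [w, Fin.snoc_castSucc]
            intro h
            rw [key _ _ h]
        · intro a b h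
          simp only [w, Fin.snoc_castSucc] at h
          have ha := a.2
          have hb := b.2
          exact Fin.ext (hinj (by simp; omega) (by simp; omega) h)
      have h0 := hf _ w hw
      rw [Fin.sum_univ_castSucc] at h0
      simp only [w, Fin.snoc_castSucc, Fin.snoc_last] at h0
      have h1 : ∑ j, f (g j) = s v - s u := by
        have : ∀ j : Fin p.length, f (g j) =
            (fun j : ℕ => s (p.getVert (j + 1)) - s (p.getVert j)) j := by
          intro j
          rw [hs _ (hgF j) _ _ (hg j)]
          simp only [CharTwo.sub_eq_add]
          rw [add_comm]
        rw [Finset.sum_congr rfl (fun j _ => this j),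
          Fin.sum_univ_eq_sum_range (fun j : ℕ => s (p.getVert (j + 1)) - s (p.getVert j)),
          Finset.sum_range_sub (fun j => s (p.getVert j))]
        simp
      rw [h1] at h0
      generalize f e = x at *
      generalize s u = y at *
      generalize s v = z at *
      revert h0
      clear * -
      revert x y z
      decide
    · refine ⟨fun x => s x + if H.Reachable v x then f e + s u + s v else 0, ?_, ?_⟩
      · intro g hg x y hxy
        have : H.Reachable v x ↔ H.Reachable v y := by
          by_cases hne : x = y
          · rw [hne]
          · have ha : H.Adj x y := by
              rw [SimpleGraph.fromRel_adj]
              exact ⟨hne, Or.inl ⟨g, hg, hxy⟩⟩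
            exact ⟨fun h => h.trans ha.reachable, fun h => h.trans ha.symm.reachable⟩
        rw [hs g hg x y hxy]
        simp only [this]
        generalize (if H.Reachable v y then f e + s u + s v else 0) = c
        generalize s x = a
        generalize s y = b
        clear * -
        revert a b c
        decide
      · have h1 : ¬ H.Reachable v u := fun h => hr h.symm
        simp only [if_neg h1, if_pos (SimpleGraph.Reachable.refl v)]
        generalize f e = x
        generalize s u = y
        generalize s v = z
        clear * -
        revert x y z
        decide

theorem exists_potential {V E : Type*} [Finite E] (ends : E → Sym2 V) (f : E → ZMod 2)
    (hf : ∀ (m : ℕ) (w : GraphWalk ends m), w.IsSimpleCycle → ∑ j, f (w.edge j) = 0) :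
    ∃ s : V → ZMod 2, ∀ e u v, ends e = s(u, v) → f e = s u + s v := by
  have := Fintype.ofFinite E
  obtain ⟨s, hs⟩ := exists_potential_aux ends f hf Finset.univ
  exact ⟨s, fun e => hs e (Finset.mem_univ e)⟩

/-- sign of an element of `ZMod 2` -/
def zsgn (x : ZMod 2) : ℤ := if x = 0 then 1 else -1

theorem zsgn_add (x y : ZMod 2) : zsgn (x + y) = zsgn x * zsgn y := by
  revert x y; decide

theorem zsgn_nat (k : ℕ) : zsgn (k : ZMod 2) = (-1) ^ k := by
  induction k with
  | zero => simp [zsgn]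
  | succ k ih =>
    rw [Nat.cast_succ, zsgn_add, ih, pow_succ]
    rfl

theorem parity_aux {V E : Type*} (ends : E → Sym2 V) {n : ℕ} (C : E → Fin n)
    (t : V → ZMod 2) (ht : ∀ e u v, ends e = s(u, v) → 1 = t u + t v)
    (s : Fin n → V → ZMod 2)
    (hs : ∀ i e u v, ends e = s(u, v) → (if C e = i then 1 else 0) = s i u + s i v)
    (q : E → ZMod 2)
    (hq : ∀ e u v, ends e = s(u, v) → s (C e) u = 0 → q e = t u)
    {m : ℕ} (w : GraphWalk ends m)
    (hc : ∀ i : Fin n,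
        (Finset.univ.filter fun j : Fin m => C (w.edge j) = i).card = 0 ∨
        (Finset.univ.filter fun j : Fin m => C (w.edge j) = i).card = 2)
    (a b : Fin m) (hab : a.val < b.val) (hcol : C (w.edge a) = C (w.edge b)) :
    q (w.edge a) + q (w.edge b) = ((b.val - a.val - 1 : ℕ) : ZMod 2) := by
  classical
  set i := C (w.edge a) with hi
  have hne : a ≠ b := fun h => by simp [h] at hab
  -- no other edges of colour `i`
  have honly : ∀ j : Fin m, C (w.edge j) = i → j = a ∨ j = b := by
    intro j hj
    by_contra hcon
    push Not at hcon
    have hsub : ({a, b, j} : Finset (Fin m)) ⊆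
        Finset.univ.filter fun j : Fin m => C (w.edge j) = i := by
      intro x hx
      simp only [Finset.mem_insert, Finset.mem_singleton] at hx
      simp only [Finset.mem_filter, Finset.mem_univ, true_and]
      rcases hx with rfl | rfl | rfl
      · rfl
      · exact hcol.symm
      · exact hj
    have h3 : ({a, b, j} : Finset (Fin m)).card = 3 :=
      Finset.card_eq_three.2 ⟨a, b, j, hne, hcon.1.symm, hcon.2.symm, rfl⟩
    have := Finset.card_le_card hsub
    rcases hc i with h | h <;> omega
  have key : ∀ d : ℕ, ∀ (h : a.val + 1 + d ≤ b.val),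
      s i (w.vert ⟨a.val + 1 + d, by omega⟩) = s i (w.vert a.succ) ∧
      t (w.vert ⟨a.val + 1 + d, by omega⟩) = t (w.vert a.succ) + d := by
    intro d
    induction d with
    | zero => intro h; simp [Fin.succ]
    | succ d ih =>
      intro h
      obtain ⟨h1, h2⟩ := ih (by omega)
      have hlt : a.val + 1 + d < m := by omega
      have he := w.ends_eq ⟨a.val + 1 + d, hlt⟩
      have e1 := hs i _ _ _ he
      have e2 := ht _ _ _ he
      have hno : C (w.edge ⟨a.val + 1 + d, hlt⟩) ≠ i := by
        intro hh
        rcases honly _ hh with h | h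
        · have := congrArg Fin.val h; simp at this; omega
        · have := congrArg Fin.val h; simp at this; omega
      rw [if_neg hno] at e1
      simp only [Fin.castSucc_mk, Fin.succ_mk] at e1 e2
      rw [h1] at e1
      rw [h2] at e2
      simp only [← add_assoc]
      push_cast
      constructor
      · exact (CharTwo.add_eq_zero.1 e1.symm).symm
      · generalize t (w.vert ⟨a.val + 1 + d + 1, _⟩) = x at *
        generalize t (w.vert a.succ) = y at *
        generalize (d : ZMod 2) = z at *
        revert e2
        clear * -
        revert x y z
        decide
  obtain ⟨k1, k2⟩ := key (b.val - a.val - 1) (by omega)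
  have hbv : (⟨a.val + 1 + (b.val - a.val - 1), by omega⟩ : Fin (m + 1)) = b.castSucc := by
    ext; simp; omega
  rw [hbv] at k1 k2
  generalize ((b.val - a.val - 1 : ℕ) : ZMod 2) = d at *
  have ea := w.ends_eq a
  have eb := w.ends_eq b
  have ea' := ea.trans Sym2.eq_swap
  have eb' := eb.trans Sym2.eq_swap
  have sa := hs i _ _ _ ea
  have sb := hs i _ _ _ eb
  rw [if_pos rfl] at sa
  rw [if_pos hcol.symm] at sb
  have ta := ht _ _ _ ea
  have tb := ht _ _ _ eb
  have qa := hq _ _ _ ea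
  have qa' := hq _ _ _ ea'
  have qb := hq _ _ _ eb
  have qb' := hq _ _ _ eb'
  rw [← hi] at qa qa'
  rw [← hcol] at qb qb'
  clear hbv key honly hc hs ht hq ea eb ea' eb'
  generalize q (w.edge a) = A at *
  generalize q (w.edge b) = B at *
  have h01 : ∀ x : ZMod 2, x = 0 ∨ x = 1 := by decide
  have arith1 : ∀ x : ZMod 2, 1 = x + 1 → x = 0 := by decide
  have arith2 : ∀ x : ZMod 2, 1 = 1 + x → x = 0 := by decide
  have arith3 : ∀ x : ZMod 2, x + (x + d) = d := by clear * -; revert d; decide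
  have arith4 : ∀ x y z : ZMod 2, 1 = x + z → 1 = z + d + y → x + y = d := by
    clear * -; revert d; decide
  rcases h01 (s i (w.vert a.succ)) with h | h
  · rw [qa' h, qb (k1.trans h), k2, arith3]
  · rw [h] at sa k1
    rw [k1] at sb
    rw [qa (arith1 _ sa), qb' (arith2 _ sb)]
    rw [k2] at tb
    exact arith4 _ _ _ ta tb

/-- Let `Γ` be a balanced graph with no closed paths of odd
length and let `C` be an `n`-balanced colouring of `Γ`.  Then there is a
function `p : E → {1, -1}` such that for any pair of distinct edges
`e₁, e₂` of the same colour lying in the same `∼`-equivalence class,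
`parity (e₁, e₂) = p e₁ · p e₂`; here `parity (e₁, e₂)` is the common value
`(-1) ^ l` for any simple cycle `w` containing `e₁` and `e₂` (at positions
`a`, `b`), where `l = (m + b - a - 1) % m` is the number of edges of the
cycle lying strictly between `e₁` and `e₂` along an arc. -/
theorem stmt6 {V E : Type*} [Finite V] [Finite E]
    (ends : E → Sym2 V) (l : E → ℕ) (n : ℕ) (C : E → Fin n)
    -- the labels are even integers `≥ 4`
    (hlabel : ∀ e : E, 4 ≤ l e ∧ Even (l e))
    -- `C` is an `n`-balanced colouring
    (hcol : ∀ i : Fin n, ∃ p : ℕ, p.Prime ∧ ∀ e : E, C e = i → p ∣ l e / 2)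
    -- no closed paths of odd length
    (hodd : ∀ (m : ℕ) (w : GraphWalk ends m), w.IsSimpleCycle → Even m)
    -- `Γ` is balanced: every closed path of even length contains exactly two
    -- or zero edges of each colour
    (hbal : ∀ (m : ℕ) (w : GraphWalk ends m), w.IsSimpleCycle → Even m →
      ∀ i : Fin n,
        (Finset.univ.filter fun j : Fin m => C (w.edge j) = i).card = 0 ∨
        (Finset.univ.filter fun j : Fin m => C (w.edge j) = i).card = 2) :
    ∃ p : E → ℤ, (∀ e : E, p e = 1 ∨ p e = -1) ∧
      ∀ e₁ e₂ : E, e₁ ≠ e₂ → C e₁ = C e₂ →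
        SameCycleClass ends C (C e₁) e₁ e₂ →
        ∀ (m : ℕ) (w : GraphWalk ends m), w.IsSimpleCycle →
          ∀ a b : Fin m, w.edge a = e₁ → w.edge b = e₂ →
            (-1 : ℤ) ^ ((m + b.val - a.val - 1) % m) = p e₁ * p e₂ := by
  classical
  have hsum1 : ∀ (m : ℕ) (w : GraphWalk ends m), w.IsSimpleCycle →
      ∑ j, (fun _ : E => (1 : ZMod 2)) (w.edge j) = 0 := by
    intro m w hw
    simp only [Finset.sum_const, Finset.card_univ, Fintype.card_fin, nsmul_eq_mul, mul_one]
    exact (ZMod.natCast_eq_zero_iff_even).2 (hodd m w hw)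
  obtain ⟨t, ht⟩ := exists_potential ends (fun _ : E => (1 : ZMod 2)) hsum1
  have hsum2 : ∀ i : Fin n, ∀ (m : ℕ) (w : GraphWalk ends m), w.IsSimpleCycle →
      ∑ j, (fun e : E => if C e = i then (1 : ZMod 2) else 0) (w.edge j) = 0 := by
    intro i m w hw
    simp only [Finset.sum_boole]
    rcases hbal m w hw (hodd m w hw) i with h | h
    · rw [h]; rfl
    · rw [h]; rfl
  choose s hs using fun i => exists_potential ends
    (fun e : E => if C e = i then (1 : ZMod 2) else 0) (hsum2 i)
  have hqe : ∀ e : E, ∃ q : ZMod 2, ∀ u v, ends e = s(u, v) → s (C e) u = 0 → q = t u := by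
    intro e
    obtain ⟨u, v, huv⟩ : ∃ u v, ends e = s(u, v) := by
      induction h : ends e with
      | _ a b => exact ⟨a, b, rfl⟩
    have h1 := hs (C e) e u v huv
    simp only [if_true] at h1
    refine ⟨if s (C e) u = 0 then t u else t v, fun x y hxy hx => ?_⟩
    rw [huv, Sym2.eq_iff] at hxy
    rcases hxy with ⟨rfl, rfl⟩ | ⟨rfl, rfl⟩
    · rw [if_pos hx]
    · rw [if_neg]
      intro h
      rw [h, hx] at h1
      exact absurd h1 (by decide)
  choose q hq using hqe
  refine ⟨fun e => zsgn (q e), fun e => ?_, ?_⟩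
  · change zsgn (q e) = 1 ∨ zsgn (q e) = -1
    generalize q e = x
    revert x
    decide
  · rintro e₁ e₂ hne hcol' - m w hw a b rfl rfl
    have hm := hodd m w hw
    have hc := hbal m w hw hm
    have ha := a.2
    have hb := b.2
    have hab : a.val ≠ b.val := fun h => hne (by rw [Fin.ext h])
    simp only
    rw [← zsgn_add]
    rcases lt_or_gt_of_ne hab with h | h
    · rw [parity_aux ends C t ht s hs q hq w hc a b h hcol', zsgn_nat]
      have : m + b.val - a.val - 1 = (b.val - a.val - 1) + m := by omega
      rw [this, Nat.add_mod_right, Nat.mod_eq_of_lt (by omega)]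
    · rw [add_comm (q (w.edge a)), parity_aux ends C t ht s hs q hq w hc b a h hcol'.symm, zsgn_nat]
      rw [Nat.mod_eq_of_lt (by omega)]
      apply neg_one_pow_congr
      grind
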